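/- In the special case a = α = β = 0 (so b = N), for every integer n with 2 ≤ n ≤ N−1 and every integer s with 0 ≤ s ≤ N−1, the weighted Racah polynomials satisfy the three-term recurrence R̂_n(s) = Θ10·R̂_{n−1}(s) + Θ20·R̂_{n−2}(s), where Θ10 = (2s(s+1) + n(n−1) − N² + 1)·√(4n²−1) / [n·(N−n)·(N+n)] and Θ20 = −[(n−1)·(N−n+1)·(N+n−1) / (n·(N−n)·(N+n))]·√((2n+1)/(2n−3)). -/

import Mathlib

open Finset

/-- Rising Pochhammer symbol `(x)_k = x (x+1) ⋯ (x+k-1)` for a real `x`. -/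
noncomputable def pochR (x : ℝ) (k : ℕ) : ℝ := ∏ i ∈ Finset.range k, (x + i)

/-- The `n`-th Racah polynomial in Zhu's normalization. -/
noncomputable def racahR (a b α β : ℝ) (n : ℕ) (s : ℝ) : ℝ :=
  (1 / (Nat.factorial n : ℝ)) * pochR (a + b + α + 1) n * pochR (β + 1) n *
    pochR (a - b + 1) n *
    ∑ k ∈ Finset.range (n + 1),
      pochR (-(n : ℝ)) k * pochR (a - s) k * pochR (a + s + 1) k *
          pochR (α + β + (n : ℝ) + 1) k /
        (pochR (β + 1) k * pochR (a + b + α + 1) k * pochR (a - b + 1) k *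
          (Nat.factorial k : ℝ))

/-- The Racah weight function `ρ(s)`. -/
noncomputable def racahW (a b α β : ℝ) (s : ℝ) : ℝ :=
  Real.Gamma (a + s + 1) * Real.Gamma (b + s + α + 1) * Real.Gamma (b + α - s) *
      Real.Gamma (s - a + β + 1) /
    (Real.Gamma (b + s + 1) * Real.Gamma (b - s) * Real.Gamma (s - a + 1) *
      Real.Gamma (a - β + s + 1))

/-- The squared norm `d_n²`. -/
noncomputable def racahD2 (a b α β : ℝ) (n : ℕ) : ℝ :=
  Real.Gamma (α + n + 1) * Real.Gamma (β + n + 1) * Real.Gamma (a + b + α + n + 1) *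
      Real.Gamma (b - a + α + β + n + 1) /
    ((α + β + 2 * n + 1) * Real.Gamma (n + 1) * Real.Gamma (b - a - n) *
      Real.Gamma (α + β + n + 1) * Real.Gamma (a + b - n - β))

/-- The weighted Racah polynomial `R̂_n(s) = R_n(s) √(ρ(s)(2s+1)/d_n²)`. -/
noncomputable def racahHat (a b α β : ℝ) (n : ℕ) (s : ℝ) : ℝ :=
  racahR a b α β n s * Real.sqrt (racahW a b α β s * (2 * s + 1) / racahD2 a b α β n)

/-- `σ(s) = (s−a)(s+b)(s+a−β)(b+α−s)`. -/
noncomputable def racahSigma (a b α β : ℝ) (s : ℝ) : ℝ :=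
  (s - a) * (s + b) * (s + a - β) * (b + α - s)

/-- `τ(s)`. -/
noncomputable def racahTau (a b α β : ℝ) (s : ℝ) : ℝ :=
  a * (α + 1) * (a - β) + b * (b + α) * (β + 1) - (α + 1) * (β + 1) -
    s * (s + 1) * (α + β + 2)

/-- `λ_n = n (n+α+β+1)`. -/
noncomputable def racahLam (α β : ℝ) (n : ℕ) : ℝ := (n : ℝ) * ((n : ℝ) + α + β + 1)

lemma pochR_succ (x : ℝ) (k : ℕ) : pochR x (k + 1) = pochR x k * (x + k) := by
  simp [pochR, Finset.prod_range_succ]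

lemma pochR_zero (x : ℝ) : pochR x 0 = 1 := by simp [pochR]

lemma pochR_succ' (x : ℝ) (k : ℕ) : pochR x (k + 1) = x * pochR (x + 1) k := by
  unfold pochR
  rw [Finset.prod_range_succ', mul_comm]
  congr 1
  · simp
  · apply Finset.prod_congr rfl
    intro i _
    push_cast
    ring

/-- `(-x)_k (x+1)_k` -/
noncomputable def auxA (x : ℝ) (k : ℕ) : ℝ := pochR (-x) k * pochR (x + 1) k

lemma auxA_succ (x : ℝ) (k : ℕ) :
    auxA x (k + 1) = -((x + 1 + k) * (x - k)) * auxA x k := by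
  unfold auxA; rw [pochR_succ, pochR_succ]; ring

lemma auxA_up (x : ℝ) (k : ℕ) :
    auxA (x + 1) (k + 1) = -((x + 1 + k) * (x + 2 + k)) * auxA x k := by
  have h : (x + 1) * pochR (x + 1 + 1) (k + 1) =
      pochR (x + 1) k * (x + 1 + k) * (x + 2 + k) := by
    rw [← pochR_succ', pochR_succ, pochR_succ]; push_cast; ring
  unfold auxA
  rw [pochR_succ' (-(x + 1)), show -(x + 1) + 1 = -x by ring]
  linear_combination (-pochR (-x) k) * h

lemma auxA_down (x : ℝ) (k : ℕ) :
    auxA (x - 1) (k + 1) = -((x - k) * (x - k - 1)) * auxA x k := by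
  have h : (-x) * pochR (-x + 1) (k + 1) =
      pochR (-x) k * (-x + k) * (-x + k + 1) := by
    rw [← pochR_succ', pochR_succ, pochR_succ]; push_cast; ring
  unfold auxA
  rw [show -(x - 1) = -x + 1 by ring, pochR_succ' (x - 1 + 1),
    show x - 1 + 1 = x by ring]
  linear_combination (-pochR (x + 1) k) * h

lemma auxA_vanish (m : ℕ) (j : ℕ) : auxA (m : ℝ) (m + 1 + j) = 0 := by
  unfold auxA
  have : pochR (-(m : ℝ)) (m + 1 + j) = 0 := by
    unfold pochR
    apply Finset.prod_eq_zero (i := m)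
    · simp; omega
    · ring
  rw [this, zero_mul]

/-- the part of the summand independent of `n` -/
noncomputable def auxT (N s : ℝ) (k : ℕ) : ℝ :=
  pochR (-s) k * pochR (s + 1) k /
    (pochR 1 k * pochR (N + 1) k * pochR (1 - N) k * (Nat.factorial k : ℝ))

noncomputable def auxF (N s : ℝ) (n : ℕ) : ℝ :=
  ∑ k ∈ Finset.range (n + 1), auxA n k * auxT N s k

lemma auxT_succ (N : ℕ) (s : ℝ) (k : ℕ) (hk : k + 1 < N) :
    auxT N s (k + 1) * (((k : ℝ) + 1) ^ 2 * (((k : ℝ) + 1) ^ 2 - (N : ℝ) ^ 2)) =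
      auxT N s k * ((k : ℝ) * (k + 1) - s * (s + 1)) := by
  have h1 : (k : ℝ) + 1 ≠ 0 := by positivity
  have h2 : (N : ℝ) + 1 + k ≠ 0 := by positivity
  have hk' : (k : ℝ) + 1 < N := by exact_mod_cast hk
  have h3 : 1 - (N : ℝ) + k ≠ 0 := by linarith
  unfold auxT
  simp only [pochR_succ, Nat.factorial_succ]
  push_cast
  generalize pochR 1 k = p1
  generalize pochR ((N : ℝ) + 1) k = p2
  generalize pochR (1 - (N : ℝ)) k = p3
  generalize (k.factorial : ℝ) = p4
  generalize pochR (-s) k = q1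
  generalize pochR (s + 1) k = q2
  rw [show p1 * (1 + (k : ℝ)) * (p2 * ((N : ℝ) + 1 + k)) * (p3 * (1 - (N : ℝ) + k)) *
      (((k : ℝ) + 1) * p4) = (p1 * p2 * p3 * p4) *
      (((k : ℝ) + 1) * ((k : ℝ) + 1) * ((N : ℝ) + 1 + k) * (1 - (N : ℝ) + k)) by ring]
  rw [← div_div, div_mul_eq_mul_div, div_eq_iff (by positivity)]
  ring

lemma partial_sum (N : ℕ) (s x : ℝ) (m : ℕ) (hm : m < N) :
    ∑ k ∈ Finset.range (m + 1),
      ((x + 1) * ((N : ℝ) ^ 2 - (x + 1) ^ 2) * auxA (x + 1) k +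
        (2 * x + 1) * (2 * s * (s + 1) + (x + 1) * x - (N : ℝ) ^ 2 + 1) * auxA x k +
        x * ((N : ℝ) ^ 2 - x ^ 2) * auxA (x - 1) k) * auxT N s k =
      -2 * (2 * x + 1) * ((m : ℝ) * (m + 1) - s * (s + 1)) * auxT N s m * auxA x m := by
  induction m with
  | zero =>
    rw [Finset.sum_range_one]
    simp only [auxA, pochR_zero, Nat.cast_zero]
    ring
  | succ m ih =>
    rw [Finset.sum_range_succ, ih (by omega)]
    have h := auxT_succ N s m hm
    rw [auxA_up, auxA_down, auxA_succ]
    push_cast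
    linear_combination (2 * (2 * x + 1) * auxA x m) * h

lemma auxF_rec (N : ℕ) (s : ℝ) (m : ℕ) (hm : m + 2 < N) :
    ((m : ℝ) + 2) * ((N : ℝ) ^ 2 - ((m : ℝ) + 2) ^ 2) * auxF N s (m + 2) +
      (2 * (m : ℝ) + 3) * (2 * s * (s + 1) + ((m : ℝ) + 2) * (m + 1) - (N : ℝ) ^ 2 + 1) *
        auxF N s (m + 1) +
      ((m : ℝ) + 1) * ((N : ℝ) ^ 2 - ((m : ℝ) + 1) ^ 2) * auxF N s m = 0 := by
  have h := partial_sum N s ((m : ℝ) + 1) (m + 2) hm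
  have e1 : auxF N s (m + 1) = ∑ k ∈ Finset.range (m + 2 + 1), auxA ((m : ℝ) + 1) k * auxT N s k := by
    have := auxA_vanish (m + 1) 0
    rw [Finset.sum_range_succ]
    push_cast at this
    simp [auxF, this]
  have e0 : auxF N s m = ∑ k ∈ Finset.range (m + 2 + 1), auxA (m : ℝ) k * auxT N s k := by
    have h0 := auxA_vanish m 0
    have h1 := auxA_vanish m 1
    rw [Finset.sum_range_succ, Finset.sum_range_succ]
    simp only [add_zero] at h0
    simp [auxF, h0, h1]
  have e2 : auxF N s (m + 2) = ∑ k ∈ Finset.range (m + 2 + 1), auxA ((m : ℝ) + 1 + 1) k * auxT N s k := by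
    unfold auxF
    push_cast
    rw [show (m : ℝ) + 1 + 1 = m + 2 by ring]
  have hv := auxA_vanish (m + 1) 0
  push_cast at hv
  rw [show m + 1 + 1 + 0 = m + 2 by ring] at hv
  rw [hv, mul_zero] at h
  rw [e0, e1, e2, Finset.mul_sum, Finset.mul_sum, Finset.mul_sum, ← Finset.sum_add_distrib,
    ← Finset.sum_add_distrib, ← h]
  apply Finset.sum_congr rfl
  intro k _
  rw [show (m : ℝ) + 1 - 1 = m by ring]
  ring

lemma pochR_fact (N n : ℕ) : pochR ((N : ℝ) + 1) n * N.factorial = (N + n).factorial := by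
  induction n with
  | zero => simp [pochR_zero]
  | succ n ih =>
    rw [pochR_succ, ← add_assoc, Nat.factorial_succ]
    push_cast
    rw [← ih]; ring

lemma pochR_neg_fact (M n : ℕ) (h : n ≤ M) :
    pochR (1 - ((M : ℝ) + 1)) n * (M - n).factorial = (-1) ^ n * M.factorial := by
  induction n with
  | zero => simp [pochR_zero]
  | succ n ih =>
    obtain ⟨d, rfl⟩ := Nat.exists_eq_add_of_lt h
    have ih := ih (by omega)
    rw [show n + d + 1 - n = d + 1 by omega, Nat.factorial_succ] at ih
    rw [pochR_succ, show n + d + 1 - (n + 1) = d by omega]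
    push_cast at ih ⊢
    rw [pow_succ]
    linear_combination (-1) * ih

lemma pochR_one (n : ℕ) : pochR 1 n = n.factorial := by
  have := pochR_fact 0 n
  simpa using this

lemma racahD2_eq (M n : ℕ) (h : n ≤ M) :
    racahD2 0 ((M + 1 : ℕ) : ℝ) 0 0 n =
      (((M + 1 + n).factorial : ℝ) / (M - n).factorial) ^ 2 / (2 * n + 1) := by
  obtain ⟨d, rfl⟩ := Nat.exists_eq_add_of_le h
  have g1 : Real.Gamma ((n : ℝ) + 1) = n.factorial := Real.Gamma_nat_eq_factorial n
  have g2 : Real.Gamma (((n + d + 1 : ℕ) : ℝ) + n + 1) = (n + d + 1 + n).factorial := by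
    rw [← Real.Gamma_nat_eq_factorial]; push_cast; rfl
  have g3 : Real.Gamma (((n + d + 1 : ℕ) : ℝ) - n) = d.factorial := by
    rw [← Real.Gamma_nat_eq_factorial]; push_cast; congr 1; ring
  have hf : (n.factorial : ℝ) ≠ 0 := by positivity
  have hd : (d.factorial : ℝ) ≠ 0 := by positivity
  have hn : 2 * (n : ℝ) + 1 ≠ 0 := by positivity
  unfold racahD2
  simp only [zero_add, add_zero, sub_zero]
  rw [g1, g2, g3, show n + d - n = d by omega]
  field_simp

lemma racahR_eq (N n : ℕ) (s : ℝ) :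
    racahR 0 N 0 0 n s = pochR ((N : ℝ) + 1) n * pochR (1 - (N : ℝ)) n * auxF N s n := by
  have hf : (n.factorial : ℝ) ≠ 0 := by positivity
  unfold racahR auxF
  simp only [zero_add, add_zero, zero_sub]
  rw [pochR_one, show -(N : ℝ) + 1 = 1 - N by ring]
  have : ∀ k, pochR (-(n : ℝ)) k * pochR (-s) k * pochR (s + 1) k * pochR ((n : ℝ) + 1) k /
      (pochR 1 k * pochR ((N : ℝ) + 1) k * pochR (1 - (N : ℝ)) k * (k.factorial : ℝ)) =
      auxA n k * auxT N s k := by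
    intro k; unfold auxA auxT; ring
  simp only [this]
  field_simp

lemma racahHat_eq (N n : ℕ) (h : n < N) (s : ℝ) :
    racahHat 0 N 0 0 n s = (-1) ^ n * auxF N s n * Real.sqrt (2 * n + 1) *
      (Real.sqrt (racahW 0 N 0 0 s * (2 * s + 1)) / N) := by
  obtain ⟨M, rfl⟩ : ∃ M, N = M + 1 := ⟨N - 1, by omega⟩
  have hM : n ≤ M := by omega
  have a1 := pochR_fact (M + 1) n
  have a2 := pochR_neg_fact M n hM
  unfold racahHat
  rw [racahR_eq, racahD2_eq M n hM, Real.sqrt_div' _ (by positivity),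
    Real.sqrt_div (by positivity), Real.sqrt_sq (by positivity), ← a1]
  have hs : Real.sqrt (2 * (n : ℝ) + 1) ≠ 0 := by positivity
  have hp : pochR (((M + 1 : ℕ) : ℝ) + 1) n ≠ 0 := by
    intro h0
    rw [h0, zero_mul] at a1
    exact (Nat.cast_ne_zero.mpr (Nat.factorial_ne_zero _)) a1.symm
  have hf : (M.factorial : ℝ) ≠ 0 := by positivity
  have hd : ((M - n).factorial : ℝ) ≠ 0 := by positivity
  have hM1 : (M : ℝ) + 1 ≠ 0 := by positivity
  rw [Nat.factorial_succ]
  push_cast at *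
  have a3 : pochR (1 - ((M : ℝ) + 1)) n = (-1) ^ n * M.factorial / (M - n).factorial := by
    rw [eq_div_iff hd, a2]
  rw [a3]
  field_simp

theorem racah_special_case_three_term_recurrence
    (N : ℕ) (hN : 2 ≤ N) (n : ℕ) (hn2 : 2 ≤ n) (hn : n ≤ N - 1)
    (s : ℕ) (hs : s ≤ N - 1) :
    racahHat 0 (N : ℝ) 0 0 n (s : ℝ) =
      ((2 * (s : ℝ) * ((s : ℝ) + 1) + (n : ℝ) * ((n : ℝ) - 1) - (N : ℝ) ^ 2 + 1) *
            Real.sqrt (4 * (n : ℝ) ^ 2 - 1) /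
          ((n : ℝ) * ((N : ℝ) - n) * ((N : ℝ) + n))) *
          racahHat 0 (N : ℝ) 0 0 (n - 1) (s : ℝ) +
        (-(((n : ℝ) - 1) * ((N : ℝ) - n + 1) * ((N : ℝ) + n - 1) /
            ((n : ℝ) * ((N : ℝ) - n) * ((N : ℝ) + n))) *
          Real.sqrt ((2 * (n : ℝ) + 1) / (2 * (n : ℝ) - 3))) *
          racahHat 0 (N : ℝ) 0 0 (n - 2) (s : ℝ) := by
  obtain ⟨m, rfl⟩ : ∃ m, n = m + 2 := ⟨n - 2, by omega⟩
  rw [show m + 2 - 1 = m + 1 by omega, show m + 2 - 2 = m by omega]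
  have hm : m + 2 < N := by omega
  rw [racahHat_eq N (m + 2) hm, racahHat_eq N (m + 1) (by omega), racahHat_eq N m (by omega)]
  have hrec := auxF_rec N (s : ℝ) m hm
  generalize Real.sqrt (racahW 0 N 0 0 s * (2 * (s : ℝ) + 1)) / N = C
  have hmN : (m : ℝ) + 2 < N := by exact_mod_cast hm
  have hd1 : (N : ℝ) - (m + 2) ≠ 0 := by linarith
  have hd2 : (N : ℝ) + (m + 2) ≠ 0 := by positivity
  have hd3 : (m : ℝ) + 2 ≠ 0 := by positivity
  push_cast
  rw [show 4 * ((m : ℝ) + 2) ^ 2 - 1 = (2 * (m + 2) + 1) * (2 * (m + 1) + 1) by ring,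
    show 2 * ((m : ℝ) + 2) - 3 = 2 * m + 1 by ring,
    Real.sqrt_mul (by positivity), Real.sqrt_div (by positivity)]
  have q1 : Real.sqrt (2 * ((m : ℝ) + 1) + 1) ^ 2 = 2 * (m + 1) + 1 :=
    Real.sq_sqrt (by positivity)
  have q0 : Real.sqrt (2 * (m : ℝ) + 1) ≠ 0 := by positivity
  generalize Real.sqrt (2 * ((m : ℝ) + 1) + 1) = r1 at *
  generalize Real.sqrt (2 * (m : ℝ) + 1) = r0 at *
  generalize Real.sqrt (2 * ((m : ℝ) + 2) + 1) = r2 at *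
  generalize auxF N s (m + 2) = F2 at *
  generalize auxF N s (m + 1) = F1 at *
  generalize auxF N s m = F0 at *
  rw [pow_add, pow_add]
  generalize (-1 : ℝ) ^ m = e
  have hF : F2 = (-(2 * (m : ℝ) + 3) * (2 * s * (s + 1) + ((m : ℝ) + 2) * (m + 1) - (N : ℝ) ^ 2 + 1)
      * F1 - ((m : ℝ) + 1) * ((N : ℝ) ^ 2 - ((m : ℝ) + 1) ^ 2) * F0) /
      (((m : ℝ) + 2) * (N - (m + 2)) * (N + (m + 2))) := by
    rw [eq_div_iff (by positivity)]
    linear_combination hrec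
  rw [hF]
  field_simp
  have q1' : r1 ^ 2 = 2 * m + 3 := by rw [q1]; ring
  ring_nf at q1' ⊢
  rw [q1']
  ring
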